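/- arXiv:2403.08788 — 9 statements merged into one kernel-verified Lean document; each statement's English description precedes it below -/
import Mathlib

section
/- For every quadruple b = (z0, z1, z2, z3) belonging to the box interval [l, u], the intersection area with the ground-truth box satisfies max(0, min(l2, g2) − max(u0, g0)) · max(0, min(l3, g3) − max(u1, g1)) ≤ I(b) ≤ max(0, min(u2, g2) − max(l0, g0)) · max(0, min(u3, g3) − max(l1, g1)). -/
/-- Area of a box given by corner coordinates `(z0, z1)` (bottom-left) and
`(z2, z3)` (upper-right). -/
noncomputable def area (z0 z1 z2 z3 : ℝ) : ℝ := (z2 - z0) * (z3 - z1)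

/-- Area of the intersection of the box `(z0, z1, z2, z3)` with the
ground-truth box `(g0, g1, g2, g3)`. -/
noncomputable def interArea (g0 g1 g2 g3 z0 z1 z2 z3 : ℝ) : ℝ :=
  max 0 (min z2 g2 - max z0 g0) * max 0 (min z3 g3 - max z1 g1)

/-- Intersection over union of the box `(z0, z1, z2, z3)` with the
ground-truth box `(g0, g1, g2, g3)`. -/
noncomputable def iou (g0 g1 g2 g3 z0 z1 z2 z3 : ℝ) : ℝ :=
  interArea g0 g1 g2 g3 z0 z1 z2 z3 /
    (area z0 z1 z2 z3 + area g0 g1 g2 g3 - interArea g0 g1 g2 g3 z0 z1 z2 z3)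

theorem stmt_1
    (g0 g1 g2 g3 : ℝ) (hg02 : g0 < g2) (hg13 : g1 < g3)
    (l0 l1 l2 l3 u0 u1 u2 u3 : ℝ)
    (hlu0 : l0 ≤ u0) (hlu1 : l1 ≤ u1) (hlu2 : l2 ≤ u2) (hlu3 : l3 ≤ u3)
    (hl02 : l0 ≤ l2) (hu02 : u0 ≤ u2) (hl13 : l1 ≤ l3) (hu13 : u1 ≤ u3)
    (z0 z1 z2 z3 : ℝ)
    (h0l : l0 ≤ z0) (h0u : z0 ≤ u0) (h1l : l1 ≤ z1) (h1u : z1 ≤ u1)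
    (h2l : l2 ≤ z2) (h2u : z2 ≤ u2) (h3l : l3 ≤ z3) (h3u : z3 ≤ u3) :
    max 0 (min l2 g2 - max u0 g0) * max 0 (min l3 g3 - max u1 g1) ≤
        interArea g0 g1 g2 g3 z0 z1 z2 z3 ∧
      interArea g0 g1 g2 g3 z0 z1 z2 z3 ≤
        max 0 (min u2 g2 - max l0 g0) * max 0 (min u3 g3 - max l1 g1) := by
  -- Each factor is nonnegative, decreasing in the lower corner and increasing in the upper one.
  unfold interArea
  constructor <;> gcongr
end

section
/- Let I_lo = max(0, min(l2, g2) − max(u0, g0)) · max(0, min(l3, g3) − max(u1, g1)) and a_hi = (u2 − l0)·(u3 − l1). Then for every bounding box b belonging to the box interval [l, u], IoU(b) ≥ I_lo / (a_hi + a(gt) − I_lo). (Soundness of the Vanilla_IoU lower bound.) -/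
theorem stmt_2
    (g0 g1 g2 g3 : ℝ) (hg02 : g0 < g2) (hg13 : g1 < g3)
    (l0 l1 l2 l3 u0 u1 u2 u3 : ℝ)
    (hlu0 : l0 ≤ u0) (hlu1 : l1 ≤ u1) (hlu2 : l2 ≤ u2) (hlu3 : l3 ≤ u3)
    (hl02 : l0 ≤ l2) (hu02 : u0 ≤ u2) (hl13 : l1 ≤ l3) (hu13 : u1 ≤ u3)
    (Ilo ahi : ℝ)
    (hIlo : Ilo = max 0 (min l2 g2 - max u0 g0) * max 0 (min l3 g3 - max u1 g1))
    (hahi : ahi = (u2 - l0) * (u3 - l1))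
    (z0 z1 z2 z3 : ℝ) (hb02 : z0 ≤ z2) (hb13 : z1 ≤ z3)
    (h0l : l0 ≤ z0) (h0u : z0 ≤ u0) (h1l : l1 ≤ z1) (h1u : z1 ≤ u1)
    (h2l : l2 ≤ z2) (h2u : z2 ≤ u2) (h3l : l3 ≤ z3) (h3u : z3 ≤ u3) :
    Ilo / (ahi + area g0 g1 g2 g3 - Ilo) ≤ iou g0 g1 g2 g3 z0 z1 z2 z3 := by
  -- An intersection of two intervals is no longer than the first of them.
  have hx : max 0 (min z2 g2 - max z0 g0) ≤ z2 - z0 :=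
    max_le (by linarith) (by linarith [min_le_left z2 g2, le_max_left z0 g0])
  have hy : max 0 (min z3 g3 - max z1 g1) ≤ z3 - z1 :=
    max_le (by linarith) (by linarith [min_le_left z3 g3, le_max_left z1 g1])
  have hI_nonneg : 0 ≤ interArea g0 g1 g2 g3 z0 z1 z2 z3 :=
    mul_nonneg (le_max_left _ _) (le_max_left _ _)
  have hI_area : interArea g0 g1 g2 g3 z0 z1 z2 z3 ≤ area z0 z1 z2 z3 :=
    mul_le_mul hx hy (le_max_left _ _) (by linarith)
  have hg_pos : 0 < area g0 g1 g2 g3 := mul_pos (by linarith) (by linarith)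
  have hIlo_le : Ilo ≤ interArea g0 g1 g2 g3 z0 z1 z2 z3 := by
    rw [hIlo]
    unfold interArea
    gcongr
  have hahi_ge : area z0 z1 z2 z3 ≤ ahi := by
    rw [hahi]
    exact mul_le_mul (by linarith) (by linarith) (by linarith) (by linarith)
  exact div_le_div₀ hI_nonneg hIlo_le (by linarith) (by linarith)
end

section
/- Let I_hi = max(0, min(u2, g2) − max(l0, g0)) · max(0, min(u3, g3) − max(l1, g1)) and a_lo = max(0, l2 − u0) · max(0, l3 − u1), and assume a_lo + a(gt) − I_hi > 0. Then for every bounding box b belonging to the box interval [l, u], IoU(b) ≤ I_hi / (a_lo + a(gt) − I_hi). (Soundness of the Vanilla_IoU upper bound.) -/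
theorem stmt_3
    (g0 g1 g2 g3 : ℝ) (hg02 : g0 < g2) (hg13 : g1 < g3)
    (l0 l1 l2 l3 u0 u1 u2 u3 : ℝ)
    (hlu0 : l0 ≤ u0) (hlu1 : l1 ≤ u1) (hlu2 : l2 ≤ u2) (hlu3 : l3 ≤ u3)
    (hl02 : l0 ≤ l2) (hu02 : u0 ≤ u2) (hl13 : l1 ≤ l3) (hu13 : u1 ≤ u3)
    (Ihi alo : ℝ)
    (hIhi : Ihi = max 0 (min u2 g2 - max l0 g0) * max 0 (min u3 g3 - max l1 g1))
    (halo : alo = max 0 (l2 - u0) * max 0 (l3 - u1))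
    (hpos : 0 < alo + area g0 g1 g2 g3 - Ihi)
    (z0 z1 z2 z3 : ℝ) (hb02 : z0 ≤ z2) (hb13 : z1 ≤ z3)
    (h0l : l0 ≤ z0) (h0u : z0 ≤ u0) (h1l : l1 ≤ z1) (h1u : z1 ≤ u1)
    (h2l : l2 ≤ z2) (h2u : z2 ≤ u2) (h3l : l3 ≤ z3) (h3u : z3 ≤ u3) :
    iou g0 g1 g2 g3 z0 z1 z2 z3 ≤ Ihi / (alo + area g0 g1 g2 g3 - Ihi) := by
  -- Both side lengths are monotone under enlarging the box, hence so is the intersection.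
  have hI : interArea g0 g1 g2 g3 z0 z1 z2 z3 ≤ Ihi := by
    rw [hIhi, interArea]
    gcongr
  have hI0 : 0 ≤ interArea g0 g1 g2 g3 z0 z1 z2 z3 := by
    unfold interArea
    positivity
  have hA : alo ≤ area z0 z1 z2 z3 := by
    rw [halo, area]
    exact mul_le_mul (max_le (by linarith) (by linarith)) (max_le (by linarith) (by linarith))
      (le_max_left _ _) (by linarith)
  unfold iou
  exact div_le_div₀ (hI0.trans hI) hI hpos (by linarith)
end

section
/- Fix real numbers z1, z2, z3 with z1 ≤ z3. The map t ↦ IoU(t, z1, z2, z3) is unimodal with peak at g0 on the valid range: (i) if t ≤ t' ≤ g0 and t' ≤ z2, then IoU(t, z1, z2, z3) ≤ IoU(t', z1, z2, z3); (ii) if g0 ≤ t ≤ t' ≤ z2, then IoU(t', z1, z2, z3) ≤ IoU(t, z1, z2, z3). -/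
lemma overlap_le_length {a b c d : ℝ} (hab : a ≤ b) : max 0 (min b d - max a c) ≤ b - a :=
  max_le (sub_nonneg.2 hab) (sub_le_sub (min_le_left _ _) (le_max_left _ _))

lemma union_pos {g0 g1 g2 g3 z0 z1 z2 z3 : ℝ} (hg02 : g0 < g2) (hg13 : g1 < g3)
    (h02 : z0 ≤ z2) (h13 : z1 ≤ z3) :
    0 < area z0 z1 z2 z3 + area g0 g1 g2 g3 - interArea g0 g1 g2 g3 z0 z1 z2 z3 := by
  have hI : interArea g0 g1 g2 g3 z0 z1 z2 z3 ≤ area z0 z1 z2 z3 :=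
    mul_le_mul (overlap_le_length h02) (overlap_le_length h13) (le_max_left _ _)
      (sub_nonneg.2 h02)
  have hG : 0 < area g0 g1 g2 g3 := mul_pos (sub_pos.2 hg02) (sub_pos.2 hg13)
  linarith

/-- The fraction `max 0 (m - t) / (z - t)` is antitone in `t`, in cross-multiplied form. -/
lemma overlap_fraction_antitone {m z t t' : ℝ} (hm : m ≤ z) (htt : t ≤ t') (ht : t' ≤ z) :
    max 0 (m - t') * (z - t) ≤ max 0 (m - t) * (z - t') := by
  rcases le_total m t' with h | h
  · rw [max_eq_left (sub_nonpos.2 h), zero_mul]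
    exact mul_nonneg (le_max_left _ _) (sub_nonneg.2 ht)
  · rw [max_eq_right (sub_nonneg.2 h), max_eq_right (sub_nonneg.2 (htt.trans h))]
    nlinarith [mul_nonneg (sub_nonneg.2 hm) (sub_nonneg.2 htt)]

theorem stmt_4
    (g0 g1 g2 g3 : ℝ) (hg02 : g0 < g2) (hg13 : g1 < g3)
    (z1 z2 z3 : ℝ) (hb13 : z1 ≤ z3) :
    (∀ t t' : ℝ, t ≤ t' → t' ≤ g0 → t' ≤ z2 →
      iou g0 g1 g2 g3 t z1 z2 z3 ≤ iou g0 g1 g2 g3 t' z1 z2 z3) ∧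
    (∀ t t' : ℝ, g0 ≤ t → t ≤ t' → t' ≤ z2 →
      iou g0 g1 g2 g3 t' z1 z2 z3 ≤ iou g0 g1 g2 g3 t z1 z2 z3) := by
  constructor
  · intro t t' htt ht'g ht'z
    have hpos := union_pos hg02 hg13 ht'z hb13
    have hI : interArea g0 g1 g2 g3 t z1 z2 z3 = interArea g0 g1 g2 g3 t' z1 z2 z3 := by
      simp only [interArea, max_eq_right ht'g, max_eq_right (htt.trans ht'g)]
    have hA : area t' z1 z2 z3 ≤ area t z1 z2 z3 :=
      mul_le_mul_of_nonneg_right (by linarith) (sub_nonneg.2 hb13)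
    unfold iou
    rw [hI]
    exact div_le_div_of_nonneg_left (mul_nonneg (le_max_left _ _) (le_max_left _ _)) hpos
      (by linarith)
  · intro t t' hgt htt ht'z
    have hpos := union_pos hg02 hg13 (htt.trans ht'z) hb13
    have hpos' := union_pos hg02 hg13 ht'z hb13
    unfold iou
    rw [div_le_div_iff₀ hpos' hpos]
    have hw : max 0 (min z2 g2 - t') ≤ max 0 (min z2 g2 - t) :=
      max_le_max le_rfl (by linarith)
    have hfrac := overlap_fraction_antitone (min_le_left z2 g2) htt ht'z
    have hh : 0 ≤ max 0 (min z3 g3 - max z1 g1) := le_max_left _ _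
    have hG : 0 ≤ area g0 g1 g2 g3 := (mul_pos (sub_pos.2 hg02) (sub_pos.2 hg13)).le
    simp only [interArea, max_eq_left hgt, max_eq_left (hgt.trans htt)]
    have h1 := mul_le_mul_of_nonneg_right hw (mul_nonneg hh hG)
    have h2 := mul_le_mul_of_nonneg_right hfrac (mul_nonneg hh (sub_nonneg.2 hb13))
    simp only [area] at h1 h2 ⊢
    -- The products of the two intersection areas cancel between the two sides.
    linarith
end

section
/- Let b = (z0, z1, z2, z3) be a bounding box with z0 < g0, and assume the overlap conditions g0 < min(z2, g2) and max(z1, g1) < min(z3, g3). Set E0 = min(z3, g3) − max(z1, g1), E2 = z3 − z1, E3 = min(z2, g2) − g0, and d = a(b) + a(gt) − I(b). Then the function t ↦ IoU(t, z1, z2, z3) has derivative at the point z0 equal to E0 · E3 · E2 / d², and this derivative is nonnegative. -/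
theorem stmt_8
    (g0 g1 g2 g3 : ℝ) (hg02 : g0 < g2) (hg13 : g1 < g3)
    (z0 z1 z2 z3 : ℝ) (hb02 : z0 ≤ z2) (hb13 : z1 ≤ z3)
    (hz0 : z0 < g0)
    (hov1 : g0 < min z2 g2) (hov2 : max z1 g1 < min z3 g3)
    (E0 E2 E3 d : ℝ)
    (hE0 : E0 = min z3 g3 - max z1 g1)
    (hE2 : E2 = z3 - z1)
    (hE3 : E3 = min z2 g2 - g0)
    (hd : d = area z0 z1 z2 z3 + area g0 g1 g2 g3 - interArea g0 g1 g2 g3 z0 z1 z2 z3) :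
    HasDerivAt (fun t : ℝ => iou g0 g1 g2 g3 t z1 z2 z3) (E0 * E3 * E2 / d ^ 2) z0 ∧
      0 ≤ E0 * E3 * E2 / d ^ 2 := by
  obtain ⟨h2z, h2g⟩ := lt_min_iff.1 hov1
  have hE0pos : 0 < E0 := by rw [hE0]; linarith
  have hE3pos : 0 < E3 := by rw [hE3]; linarith
  have hE0b : E0 ≤ E2 := by
    rw [hE0, hE2]; linarith [min_le_left z3 g3, le_max_left z1 g1]
  have hE0g : E0 ≤ g3 - g1 := by
    rw [hE0]; linarith [min_le_right z3 g3, le_max_right z1 g1]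
  have hE3g : E3 ≤ g2 - g0 := by
    rw [hE3]; linarith [min_le_right z2 g2]
  have hE2pos : 0 < E2 := hE0pos.trans_le hE0b
  have hI : ∀ t < g0, interArea g0 g1 g2 g3 t z1 z2 z3 = E3 * E0 := by
    intro t ht
    rw [interArea, max_eq_right ht.le, ← hE3, ← hE0, max_eq_right hE3pos.le,
      max_eq_right hE0pos.le]
  have hd' : d = (z2 - z0) * E2 + area g0 g1 g2 g3 - E3 * E0 := by
    rw [hd, hI z0 hz0, hE2]; rfl
  -- The intersection fits inside the ground truth, and the box itself has positive area.
  have hdpos : 0 < d := by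
    have hgt : E3 * E0 ≤ area g0 g1 g2 g3 :=
      mul_le_mul hE3g hE0g hE0pos.le (by linarith)
    have hbox : 0 < (z2 - z0) * E2 := mul_pos (by linarith) hE2pos
    linarith
  refine ⟨?_, by positivity⟩
  have hev : (fun t : ℝ => iou g0 g1 g2 g3 t z1 z2 z3) =ᶠ[nhds z0]
      fun t => E3 * E0 / ((z2 - t) * E2 + area g0 g1 g2 g3 - E3 * E0) := by
    filter_upwards [Iio_mem_nhds hz0] with t ht
    rw [iou, hI t ht, hE2]; rfl
  refine HasDerivAt.congr_of_eventuallyEq ?_ hev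
  have hden : HasDerivAt (fun t : ℝ => (z2 - t) * E2 + area g0 g1 g2 g3 - E3 * E0)
      (-1 * E2) z0 :=
    ((((hasDerivAt_id z0).const_sub z2).mul_const E2).add_const _).sub_const _
  refine ((hasDerivAt_const z0 (E3 * E0)).fun_div hden
    (by rw [← hd']; exact hdpos.ne')).congr_deriv ?_
  rw [← hd']
  ring
end

section
/- Let b = (z0, z1, z2, z3) be a bounding box with g0 < z0 < min(z2, g2), and assume the overlap condition max(z1, g1) < min(z3, g3). Set E0 = min(z3, g3) − max(z1, g1), E2 = z3 − z1, E5 = z2 − min(z2, g2), and d = a(b) + a(gt) − I(b). Then the function t ↦ IoU(t, z1, z2, z3) has derivative at the point z0 equal to −E0 · (E2 · E5 + a(gt)) / d², and this derivative is nonpositive. -/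
theorem stmt_9
    (g0 g1 g2 g3 : ℝ) (hg02 : g0 < g2) (hg13 : g1 < g3)
    (z0 z1 z2 z3 : ℝ) (hb02 : z0 ≤ z2) (hb13 : z1 ≤ z3)
    (hz0l : g0 < z0) (hz0u : z0 < min z2 g2)
    (hov : max z1 g1 < min z3 g3)
    (E0 E2 E5 d : ℝ)
    (hE0 : E0 = min z3 g3 - max z1 g1)
    (hE2 : E2 = z3 - z1)
    (hE5 : E5 = z2 - min z2 g2)
    (hd : d = area z0 z1 z2 z3 + area g0 g1 g2 g3 - interArea g0 g1 g2 g3 z0 z1 z2 z3) :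
    HasDerivAt (fun t : ℝ => iou g0 g1 g2 g3 t z1 z2 z3)
        (-(E0 * (E2 * E5 + area g0 g1 g2 g3)) / d ^ 2) z0 ∧
      -(E0 * (E2 * E5 + area g0 g1 g2 g3)) / d ^ 2 ≤ 0 := by
  have hE0pos : 0 < E0 := by rw [hE0]; linarith
  have hE02 : E0 ≤ E2 := by
    rw [hE0, hE2]
    linarith [min_le_left z3 g3, le_max_left z1 g1]
  have hE5nn : 0 ≤ E5 := by rw [hE5]; linarith [min_le_left z2 g2]
  have hA : 0 < area g0 g1 g2 g3 := mul_pos (sub_pos.2 hg02) (sub_pos.2 hg13)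
  -- For `g0 < t < min z2 g2` every truncation in the intersection area is inactive.
  have hI : ∀ t, g0 < t → t < min z2 g2 →
      interArea g0 g1 g2 g3 t z1 z2 z3 = (min z2 g2 - t) * E0 := by
    intro t h1 h2
    rw [interArea, max_eq_left h1.le, ← hE0, max_eq_right (sub_nonneg.2 h2.le),
      max_eq_right hE0pos.le]
  have hd' : d = (z2 - z0) * E2 + area g0 g1 g2 g3 - (min z2 g2 - z0) * E0 := by
    rw [hd, hI z0 hz0l hz0u, hE2, area]
  have hdpos : 0 < d := by
    have h : (min z2 g2 - z0) * E0 ≤ (z2 - z0) * E2 :=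
      mul_le_mul (by linarith) hE02 hE0pos.le (by linarith)
    linarith
  constructor
  · have hN : HasDerivAt (fun t : ℝ => (min z2 g2 - t) * E0) (-1 * E0) z0 :=
      ((hasDerivAt_id z0).const_sub _).mul_const E0
    have hB : HasDerivAt (fun t : ℝ => (z2 - t) * E2 + area g0 g1 g2 g3) (-1 * E2) z0 :=
      (((hasDerivAt_id z0).const_sub _).mul_const E2).add_const _
    have hQ := hN.fun_div (hB.fun_sub hN) (by rw [← hd']; exact hdpos.ne')
    have hev : (fun t : ℝ => iou g0 g1 g2 g3 t z1 z2 z3) =ᶠ[nhds z0] fun t =>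
        (min z2 g2 - t) * E0 /
          ((z2 - t) * E2 + area g0 g1 g2 g3 - (min z2 g2 - t) * E0) := by
      filter_upwards [Ioo_mem_nhds hz0l hz0u] with t ht
      rw [iou, hI t ht.1 ht.2, area, hE2]
    refine (hQ.congr_of_eventuallyEq hev).congr_deriv ?_
    rw [← hd']
    congr 1
    -- In the quotient-rule numerator the `E0 ^ 2` terms cancel.
    rw [hd', hE5]
    ring
  · have hE2nn : 0 ≤ E2 := hE0pos.le.trans hE02
    exact div_nonpos_of_nonpos_of_nonneg (neg_nonpos.2 (by positivity)) (by positivity)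
end

section
/- Fix real numbers z1, z2, z3 with z1 ≤ z3, and an interval [l0, u0] with l0 ≤ u0 ≤ z2. Let z0* = max(l0, min(g0, u0)) be g0 clipped to [l0, u0]. Then for every t ∈ [l0, u0], IoU(t, z1, z2, z3) ≤ IoU(z0*, z1, z2, z3); i.e., the clipped coordinate maximizes IoU over the interval for the first coordinate with the other coordinates fixed. -/
lemma interArea_le_area (g0 g1 g2 g3 : ℝ) {z0 z1 z2 z3 : ℝ} (h02 : z0 ≤ z2) (h13 : z1 ≤ z3) :
    interArea g0 g1 g2 g3 z0 z1 z2 z3 ≤ area z0 z1 z2 z3 := by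
  unfold interArea area
  refine mul_le_mul (max_le (by linarith) ?_) (max_le (by linarith) ?_) (le_max_left _ _)
    (by linarith)
  · linarith [min_le_left z2 g2, le_max_left z0 g0]
  · linarith [min_le_left z3 g3, le_max_left z1 g1]

/-- Comparison of IoU at two first coordinates: it suffices that the overlap width, and its ratio to
the box width (in cross-multiplied form), both increase. -/
lemma iou_le_iou {g0 g1 g2 g3 : ℝ} (hg02 : g0 < g2) (hg13 : g1 < g3) {z1 z2 z3 t s : ℝ}
    (hb13 : z1 ≤ z3) (ht : t ≤ z2) (hs : s ≤ z2)
    (hx : max 0 (min z2 g2 - max t g0) ≤ max 0 (min z2 g2 - max s g0))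
    (hxw : max 0 (min z2 g2 - max t g0) * (z2 - s) ≤ max 0 (min z2 g2 - max s g0) * (z2 - t)) :
    iou g0 g1 g2 g3 t z1 z2 z3 ≤ iou g0 g1 g2 g3 s z1 z2 z3 := by
  have hG : 0 < area g0 g1 g2 g3 := mul_pos (sub_pos.2 hg02) (sub_pos.2 hg13)
  have hdt := interArea_le_area g0 g1 g2 g3 ht hb13
  have hds := interArea_le_area g0 g1 g2 g3 hs hb13
  unfold iou
  rw [div_le_div_iff₀ (by linarith) (by linarith)]
  unfold interArea area at *
  have hy : 0 ≤ max 0 (min z3 g3 - max z1 g1) := le_max_left _ _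
  -- The products of intersection areas on the two sides cancel.
  linear_combination
    mul_le_mul_of_nonneg_left hxw (mul_nonneg hy (sub_nonneg.2 hb13))
      + mul_le_mul_of_nonneg_left hx (mul_nonneg hy hG.le)

theorem stmt_10
    (g0 g1 g2 g3 : ℝ) (hg02 : g0 < g2) (hg13 : g1 < g3)
    (z1 z2 z3 : ℝ) (hb13 : z1 ≤ z3)
    (l0 u0 : ℝ) (hlu : l0 ≤ u0) (hu2 : u0 ≤ z2) :
    ∀ t : ℝ, l0 ≤ t → t ≤ u0 →
      iou g0 g1 g2 g3 t z1 z2 z3 ≤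
        iou g0 g1 g2 g3 (max l0 (min g0 u0)) z1 z2 z3 := by
  intro t hlt htu
  have hsu : max l0 (min g0 u0) ≤ u0 := max_le hlu (min_le_right _ _)
  set s := max l0 (min g0 u0) with hs
  have key : (t ≤ s ∧ s ≤ g0) ∨ (g0 ≤ s ∧ s ≤ t) ∨ t = s := by grind
  rcases key with ⟨hts, hsg⟩ | ⟨hgs, hst⟩ | hts
  · apply iou_le_iou hg02 hg13 hb13 (htu.trans hu2) (hsu.trans hu2)
    · rw [max_eq_right hsg, max_eq_right (hts.trans hsg)]
    · rw [max_eq_right hsg, max_eq_right (hts.trans hsg)]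
      exact mul_le_mul_of_nonneg_left (by linarith) (le_max_left _ _)
  · apply iou_le_iou hg02 hg13 hb13 (htu.trans hu2) (hsu.trans hu2)
    · gcongr
    · rw [max_eq_left hgs, max_eq_left (hgs.trans hst)]
      have hm : min z2 g2 ≤ z2 := min_le_left _ _
      rcases le_total (min z2 g2 - t) 0 with h | h
      · rw [max_eq_left h, zero_mul]
        exact mul_nonneg (le_max_left _ _) (by linarith)
      · rw [max_eq_right h, max_eq_right (by linarith)]
        -- The difference of the two sides is `(z2 - m) * (t - s)`.
        linear_combination mul_nonneg (sub_nonneg.2 hm) (sub_nonneg.2 hst)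
  · rw [hts]
end

section
/- Assume u0 < l2 and u1 < l3 (so every quadruple in the box interval [l, u] is a bounding box). Then there exists a quadruple v = (v0, v1, v2, v3) with v_i ∈ {l_i, u_i} for each i such that IoU(v) ≤ IoU(b) for every quadruple b belonging to [l, u]; i.e., the minimum of IoU over [l, u] is attained at a vertex of the 4-dimensional hyperrectangle [l, u]. -/
lemma iou_swap (g0 g1 g2 g3 z0 z1 z2 z3 : ℝ) :
    iou g0 g1 g2 g3 z0 z1 z2 z3 = iou g1 g0 g3 g2 z1 z0 z3 z2 := by
  unfold iou interArea area
  simp only [mul_comm]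

/-- Reflection of the first axis exchanges the roles of the left and right edges. -/
lemma iou_reflect (g0 g1 g2 g3 z0 z1 z2 z3 : ℝ) :
    iou g0 g1 g2 g3 z0 z1 z2 z3 = iou (-g2) g1 (-g0) g3 (-z2) z1 (-z0) z3 := by
  unfold iou interArea area
  rw [min_neg_neg, max_neg_neg]
  ring_nf

lemma overlap_le {g0 g2 z0 z2 : ℝ} (hz : z0 ≤ z2) :
    max 0 (min z2 g2 - max z0 g0) ≤ z2 - z0 :=
  max_le (by linarith) (by linarith [min_le_left z2 g2, le_max_left z0 g0])

lemma interArea_nonneg (g0 g1 g2 g3 z0 z1 z2 z3 : ℝ) :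
    0 ≤ interArea g0 g1 g2 g3 z0 z1 z2 z3 :=
  mul_nonneg (le_max_left _ _) (le_max_left _ _)

/-- Quasi-concavity of IoU in the position of the right edge. -/
lemma iou_right {g0 g1 g2 g3 z0 z1 z3 a z b : ℝ} (hg02 : g0 < g2) (hg13 : g1 < g3)
    (h0 : z0 ≤ a) (h13 : z1 ≤ z3) (haz : a ≤ z) (hzb : z ≤ b) :
    iou g0 g1 g2 g3 z0 z1 a z3 ≤ iou g0 g1 g2 g3 z0 z1 z z3 ∨
      iou g0 g1 g2 g3 z0 z1 b z3 ≤ iou g0 g1 g2 g3 z0 z1 z z3 := by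
  have ha := union_pos hg02 hg13 h0 h13
  have hz := union_pos hg02 hg13 (h0.trans haz) h13
  have hb := union_pos hg02 hg13 ((h0.trans haz).trans hzb) h13
  rcases le_total z g2 with hzg | hzg
  · left
    unfold iou
    rw [div_le_div_iff₀ ha hz]
    have hH := overlap_le (g0 := g1) (g2 := g3) h13
    have hH0 : 0 ≤ max 0 (min z3 g3 - max z1 g1) := le_max_left _ _
    have hA : 0 < area g0 g1 g2 g3 := mul_pos (by linarith) (by linarith)
    have hM : z0 ≤ max z0 g0 := le_max_left _ _
    simp only [interArea, min_eq_left hzg, min_eq_left (haz.trans hzg)]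
    set H := max 0 (min z3 g3 - max z1 g1)
    set M := max z0 g0
    rcases le_total a M with haM | haM
    · rw [max_eq_left (sub_nonpos.2 haM)]
      have : 0 ≤ area z0 z1 a z3 := mul_nonneg (by linarith) (by linarith)
      have : 0 ≤ max 0 (z - M) := le_max_left _ _
      simp only [zero_mul, sub_zero]
      positivity
    · rw [max_eq_right (sub_nonneg.2 haM), max_eq_right (by linarith)]
      -- The cross-multiplied difference equals exactly this nonnegative product.
      have h1 : 0 ≤ H * ((z - a) * (area g0 g1 g2 g3 + (M - z0) * (z3 - z1))) := by
        have : 0 ≤ (M - z0) * (z3 - z1) := mul_nonneg (by linarith) (by linarith)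
        exact mul_nonneg hH0 (mul_nonneg (by linarith) (by linarith))
      simp only [area] at h1 ⊢
      linarith
  · right
    have hI : interArea g0 g1 g2 g3 z0 z1 b z3 = interArea g0 g1 g2 g3 z0 z1 z z3 := by
      unfold interArea
      rw [min_eq_right hzg, min_eq_right (hzg.trans hzb)]
    have hA : area z0 z1 z z3 ≤ area z0 z1 b z3 :=
      mul_le_mul_of_nonneg_right (by linarith) (by linarith)
    unfold iou
    rw [hI]
    exact div_le_div_of_nonneg_left (interArea_nonneg _ _ _ _ _ _ _ _) hz (by linarith)

/-- Quasi-concavity of IoU in the position of the left edge. -/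
lemma iou_left {g0 g1 g2 g3 z1 z2 z3 a z b : ℝ} (hg02 : g0 < g2) (hg13 : g1 < g3)
    (h2 : b ≤ z2) (h13 : z1 ≤ z3) (haz : a ≤ z) (hzb : z ≤ b) :
    iou g0 g1 g2 g3 a z1 z2 z3 ≤ iou g0 g1 g2 g3 z z1 z2 z3 ∨
      iou g0 g1 g2 g3 b z1 z2 z3 ≤ iou g0 g1 g2 g3 z z1 z2 z3 := by
  simp only [iou_reflect g0 g1 g2 g3]
  exact (iou_right (neg_lt_neg hg02) hg13 (neg_le_neg h2) h13 (neg_le_neg hzb)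
    (neg_le_neg haz)).symm

/-- Every point of the box interval is dominated by some vertex. -/
lemma exists_vertex_le {g0 g1 g2 g3 l0 l1 l2 l3 u0 u1 u2 u3 z0 z1 z2 z3 : ℝ}
    (hg02 : g0 < g2) (hg13 : g1 < g3) (hc0 : u0 < l2) (hc1 : u1 < l3)
    (hl0 : l0 ≤ z0) (hu0 : z0 ≤ u0) (hl1 : l1 ≤ z1) (hu1 : z1 ≤ u1)
    (hl2 : l2 ≤ z2) (hu2 : z2 ≤ u2) (hl3 : l3 ≤ z3) (hu3 : z3 ≤ u3) :
    ∃ v0 v1 v2 v3 : ℝ,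
      (v0 = l0 ∨ v0 = u0) ∧ (v1 = l1 ∨ v1 = u1) ∧
      (v2 = l2 ∨ v2 = u2) ∧ (v3 = l3 ∨ v3 = u3) ∧
      iou g0 g1 g2 g3 v0 v1 v2 v3 ≤ iou g0 g1 g2 g3 z0 z1 z2 z3 := by
  obtain ⟨v0, m0, h0, i0⟩ : ∃ v0, (v0 = l0 ∨ v0 = u0) ∧ v0 ≤ u0 ∧
      iou g0 g1 g2 g3 v0 z1 z2 z3 ≤ iou g0 g1 g2 g3 z0 z1 z2 z3 := by
    rcases iou_left hg02 hg13 (hc0.le.trans hl2) (by linarith : z1 ≤ z3) hl0 hu0 with h | h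
    · exact ⟨l0, .inl rfl, hl0.trans hu0, h⟩
    · exact ⟨u0, .inr rfl, le_rfl, h⟩
  obtain ⟨v2, m2, h2, i2⟩ : ∃ v2, (v2 = l2 ∨ v2 = u2) ∧ l2 ≤ v2 ∧
      iou g0 g1 g2 g3 v0 z1 v2 z3 ≤ iou g0 g1 g2 g3 v0 z1 z2 z3 := by
    rcases iou_right hg02 hg13 (by linarith : v0 ≤ l2) (by linarith : z1 ≤ z3) hl2 hu2 with h | h
    · exact ⟨l2, .inl rfl, le_rfl, h⟩
    · exact ⟨u2, .inr rfl, hl2.trans hu2, h⟩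
  obtain ⟨v1, m1, h1, i1⟩ : ∃ v1, (v1 = l1 ∨ v1 = u1) ∧ v1 ≤ u1 ∧
      iou g0 g1 g2 g3 v0 v1 v2 z3 ≤ iou g0 g1 g2 g3 v0 z1 v2 z3 := by
    simp only [iou_swap g0 g1 g2 g3]
    rcases iou_left hg13 hg02 (hc1.le.trans hl3) (by linarith : v0 ≤ v2) hl1 hu1 with h | h
    · exact ⟨l1, .inl rfl, hl1.trans hu1, h⟩
    · exact ⟨u1, .inr rfl, le_rfl, h⟩
  obtain ⟨v3, m3, i3⟩ : ∃ v3, (v3 = l3 ∨ v3 = u3) ∧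
      iou g0 g1 g2 g3 v0 v1 v2 v3 ≤ iou g0 g1 g2 g3 v0 v1 v2 z3 := by
    simp only [iou_swap g0 g1 g2 g3]
    rcases iou_right hg13 hg02 (by linarith : v1 ≤ l3) (by linarith : v0 ≤ v2) hl3 hu3 with h | h
    · exact ⟨l3, .inl rfl, h⟩
    · exact ⟨u3, .inr rfl, h⟩
  exact ⟨v0, v1, v2, v3, m0, m1, m2, m3, i3.trans (i1.trans (i2.trans i0))⟩

theorem stmt_12
    (g0 g1 g2 g3 : ℝ) (hg02 : g0 < g2) (hg13 : g1 < g3)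
    (l0 l1 l2 l3 u0 u1 u2 u3 : ℝ)
    (hlu0 : l0 ≤ u0) (hlu1 : l1 ≤ u1) (hlu2 : l2 ≤ u2) (hlu3 : l3 ≤ u3)
    (hl02 : l0 ≤ l2) (hu02 : u0 ≤ u2) (hl13 : l1 ≤ l3) (hu13 : u1 ≤ u3)
    (hcorner0 : u0 < l2) (hcorner1 : u1 < l3) :
    ∃ v0 v1 v2 v3 : ℝ,
      (v0 = l0 ∨ v0 = u0) ∧ (v1 = l1 ∨ v1 = u1) ∧
      (v2 = l2 ∨ v2 = u2) ∧ (v3 = l3 ∨ v3 = u3) ∧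
      ∀ z0 z1 z2 z3 : ℝ,
        l0 ≤ z0 → z0 ≤ u0 → l1 ≤ z1 → z1 ≤ u1 →
        l2 ≤ z2 → z2 ≤ u2 → l3 ≤ z3 → z3 ≤ u3 →
        iou g0 g1 g2 g3 v0 v1 v2 v3 ≤ iou g0 g1 g2 g3 z0 z1 z2 z3 := by
  classical
  obtain ⟨⟨v0, v1, v2, v3⟩, hv, hmin⟩ :=
    Finset.exists_min_image (({l0, u0} : Finset ℝ) ×ˢ ({l1, u1} : Finset ℝ) ×ˢ
        ({l2, u2} : Finset ℝ) ×ˢ ({l3, u3} : Finset ℝ))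
      (fun p => iou g0 g1 g2 g3 p.1 p.2.1 p.2.2.1 p.2.2.2) ⟨(l0, l1, l2, l3), by simp⟩
  simp only [Finset.mem_product, Finset.mem_insert, Finset.mem_singleton] at hv hmin
  obtain ⟨m0, m1, m2, m3⟩ := hv
  refine ⟨v0, v1, v2, v3, m0, m1, m2, m3, ?_⟩
  intro z0 z1 z2 z3 a0 b0 a1 b1 a2 b2 a3 b3
  obtain ⟨w0, w1, w2, w3, n0, n1, n2, n3, hw⟩ :=
    exists_vertex_le hg02 hg13 hcorner0 hcorner1 a0 b0 a1 b1 a2 b2 a3 b3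
  exact (hmin (w0, w1, w2, w3) ⟨n0, n1, n2, n3⟩).trans hw
end

section
/- Let b = (z0, z1, z2, z3) and b' = (z0', z1', z2', z3') be bounding boxes such that for each i ∈ {0,1,2,3}, z_i' lies between z_i and the corresponding ground-truth coordinate g_i, i.e., min(z_i, g_i) ≤ z_i' ≤ max(z_i, g_i). Then IoU(b) ≤ IoU(b'); i.e., IoU increases when the coordinates of the predicted box get closer to the ground-truth coordinates. -/
/-- Length of the overlap of the intervals `[z, y]` and `[g, h]`. -/
noncomputable def overlap (g h z y : ℝ) : ℝ := max 0 (min y h - max z g)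

lemma interArea_eq (g0 g1 g2 g3 z0 z1 z2 z3 : ℝ) :
    interArea g0 g1 g2 g3 z0 z1 z2 z3 = overlap g0 g2 z0 z2 * overlap g1 g3 z1 z3 := rfl

lemma overlap_nonneg (g h z y : ℝ) : 0 ≤ overlap g h z y := le_max_left _ _

lemma overlap_le_length_s14 {g h z y : ℝ} (hzy : z ≤ y) : overlap g h z y ≤ y - z :=
  max_le (sub_nonneg.2 hzy) (sub_le_sub (min_le_left _ _) (le_max_left _ _))

lemma overlap_mono {g h z y z' y' : ℝ} (hzu : z' ≤ max z g) (hyl : min y h ≤ y') :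
    overlap g h z y ≤ overlap g h z' y' :=
  max_le_max le_rfl (sub_le_sub (le_min hyl (min_le_right _ _)) (max_le hzu (le_max_right _ _)))

/-- The fraction of the predicted interval covered by the ground truth grows when the endpoints
move towards the ground truth, in cross-multiplied form. -/
lemma overlap_ratio {g h z y z' y' : ℝ} (hzy : z ≤ y)
    (hzl : min z g ≤ z') (hzu : z' ≤ max z g) (hyl : min y h ≤ y') (hyu : y' ≤ max y h) :
    overlap g h z y * (y' - z') ≤ overlap g h z' y' * (y - z) := by
  have hmono : overlap g h z y ≤ overlap g h z' y' := overlap_mono hzu hyl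
  have hlen : overlap g h z y ≤ y - z := overlap_le_length_s14 hzy
  rcases (overlap_nonneg g h z y).eq_or_lt with h0 | hpos
  · rw [← h0, zero_mul]
    exact mul_nonneg (overlap_nonneg _ _ _ _) (sub_nonneg.2 hzy)
  · have hi : overlap g h z y = min y h - max z g := by
      unfold overlap at hpos ⊢
      exact max_eq_right ((lt_max_iff.1 hpos).resolve_left (lt_irrefl _)).le
    have hi' : min y' h - max z' g ≤ overlap g h z' y' := le_max_right _ _
    have hleft : max z' g - z' ≤ max z g - z := by grind
    have hright : y' - min y' h ≤ y - min y h := by grind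
    -- The part of the predicted interval outside the ground truth shrinks.
    have hout : (y' - z') - overlap g h z' y' ≤ (y - z) - overlap g h z y := by linarith
    nlinarith [mul_le_mul_of_nonneg_left hout hpos.le,
      mul_le_mul_of_nonneg_right hmono (sub_nonneg.2 hlen)]

theorem stmt_14
    (g0 g1 g2 g3 : ℝ) (hg02 : g0 < g2) (hg13 : g1 < g3)
    (z0 z1 z2 z3 : ℝ) (hb02 : z0 ≤ z2) (hb13 : z1 ≤ z3)
    (z0' z1' z2' z3' : ℝ) (hb02' : z0' ≤ z2') (hb13' : z1' ≤ z3')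
    (h0l : min z0 g0 ≤ z0') (h0u : z0' ≤ max z0 g0)
    (h1l : min z1 g1 ≤ z1') (h1u : z1' ≤ max z1 g1)
    (h2l : min z2 g2 ≤ z2') (h2u : z2' ≤ max z2 g2)
    (h3l : min z3 g3 ≤ z3') (h3u : z3' ≤ max z3 g3) :
    iou g0 g1 g2 g3 z0 z1 z2 z3 ≤ iou g0 g1 g2 g3 z0' z1' z2' z3' := by
  have hx := overlap_ratio hb02 h0l h0u h2l h2u
  have hy := overlap_ratio hb13 h1l h1u h3l h3u
  have hI := mul_le_mul (overlap_mono h0u h2l) (overlap_mono h1u h3l)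
    (overlap_nonneg g1 g3 z1 z3) (overlap_nonneg g0 g2 z0' z2')
  have hIA := mul_le_mul hx hy
    (mul_nonneg (overlap_nonneg g1 g3 z1 z3) (sub_nonneg.2 hb13'))
    (mul_nonneg (overlap_nonneg g0 g2 z0' z2') (sub_nonneg.2 hb02))
  have hA := mul_le_mul (overlap_le_length_s14 (g := g0) (h := g2) hb02)
    (overlap_le_length_s14 (g := g1) (h := g3) hb13) (overlap_nonneg _ _ _ _) (sub_nonneg.2 hb02)
  have hA' := mul_le_mul (overlap_le_length_s14 (g := g0) (h := g2) hb02')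
    (overlap_le_length_s14 (g := g1) (h := g3) hb13') (overlap_nonneg _ _ _ _) (sub_nonneg.2 hb02')
  have hG : 0 < (g2 - g0) * (g3 - g1) := mul_pos (sub_pos.2 hg02) (sub_pos.2 hg13)
  have hIG := mul_le_mul_of_nonneg_right hI hG.le
  simp only [iou, interArea_eq, area]
  rw [div_le_div_iff₀ (by linarith) (by linarith)]
  linarith
end
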